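/- Let n ≥ 1 and k > 0 be fixed, and let p : Fin n → Fin n → ℝ be a probability mass function on pairs with p i j > 0 for all i, j; write q i := ∑_j p i j for the marginal (assume the symmetric marginal ∑_i p i j equals q j as well, i.e. p has equal row and column marginals, or simply use marginals qᵣ i = ∑_j p i j and q_c j = ∑_i p i j). Define the objective F(x) = ∑_{i,j} [ p i j * Real.log (x i j) + qᵣ i * q_c j * k * Real.log (1 - x i j) ] over matrices x : Fin n → Fin n → ℝ with 0 < x i j < 1 for all i, j. Then F attains its maximum over all such matrices at the matrix x* given by x* i j = σ( log (p i j / (qᵣ i * q_c j)) - log k ), where σ(t) = 1/(1 + exp(-t)); that is, for every x with entries in (0,1), F(x) ≤ F(x*), with equality iff x = x*. -/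

import Mathlib

open scoped BigOperators

/-- The logistic sigmoid function σ(t) = 1/(1 + e^{-t}). -/
noncomputable def logisticSigmoid (t : ℝ) : ℝ := 1 / (1 + Real.exp (-t))

/-!
The objective is a sum of one-variable functions, one for each entry of the matrix. Up to the
positive factor `p + q * k`, the function belonging to an entry with weights `p` and `q * k` is
minus the cross-entropy, relative to a Bernoulli variable of parameter `y`, of a Bernoulli variable
of parameter `p / (p + q * k)`. By Gibbs' inequality it is maximal exactly at
`y = p / (p + q * k)`, and this ratio is the sigmoid of its log-odds `log (p / q) - log k`.
-/

section

open Real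

theorem logisticSigmoid_eq_sigmoid : logisticSigmoid = Real.sigmoid :=
  funext fun _ ↦ one_div _

theorem logisticSigmoid_log_sub_log {a b : ℝ} (ha : 0 < a) (hb : 0 < b) :
    logisticSigmoid (log a - log b) = a / (a + b) := by
  rw [logisticSigmoid, neg_sub, exp_sub, exp_log ha, exp_log hb]
  field_simp

theorem mul_log_lt_mul_log_add_sub {a y : ℝ} (ha : 0 ≤ a) (hy : 0 < y) (hne : y ≠ a) :
    a * log y < a * log a + (y - a) := by
  obtain rfl | ha := ha.eq_or_lt
  · simpa using hy
  have hlog : log y - log a < y / a - 1 := by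
    rw [← log_div hy.ne' ha.ne']
    exact log_lt_sub_one_of_pos (div_pos hy ha) (by rwa [Ne, div_eq_one_iff_eq ha.ne'])
  calc a * log y = a * log a + a * (log y - log a) := by ring
    _ < a * log a + a * (y / a - 1) := by gcongr
    _ = a * log a + (y - a) := by field_simp

theorem bernoulli_gibbs_lt {t y : ℝ} (ht₀ : 0 ≤ t) (ht₁ : t ≤ 1) (hy₀ : 0 < y) (hy₁ : y < 1)
    (hne : y ≠ t) :
    t * log y + (1 - t) * log (1 - y) < t * log t + (1 - t) * log (1 - t) := by
  have hsuccess := mul_log_lt_mul_log_add_sub ht₀ hy₀ hne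
  have hfailure := mul_log_lt_mul_log_add_sub (sub_nonneg.2 ht₁) (sub_pos.2 hy₁)
    (sub_right_injective.ne hne)
  linarith

theorem mul_log_add_mul_log_one_sub_lt {a b y : ℝ} (ha : 0 ≤ a) (hb : 0 ≤ b) (hab : 0 < a + b)
    (hy₀ : 0 < y) (hy₁ : y < 1) (hne : y ≠ a / (a + b)) :
    a * log y + b * log (1 - y) <
      a * log (a / (a + b)) + b * log (1 - a / (a + b)) := by
  set t := a / (a + b) with ht
  have ht₀ : 0 ≤ t := div_nonneg ha hab.le
  have ht₁ : t ≤ 1 := (div_le_one hab).2 (le_add_of_nonneg_right hb)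
  have hat : a = (a + b) * t := by rw [ht]; field_simp
  have hbt : b = (a + b) * (1 - t) := by linarith
  have hscale (z : ℝ) :
      a * log z + b * log (1 - z) = (a + b) * (t * log z + (1 - t) * log (1 - z)) := by
    linear_combination log z * hat + log (1 - z) * hbt
  rw [hscale, hscale]
  exact mul_lt_mul_of_pos_left (bernoulli_gibbs_lt ht₀ ht₁ hy₀ hy₁ hne) hab

theorem sum_lt_sum_of_forall_ne_imp_lt {ι M : Type*} [Fintype ι] [AddCommMonoid M]
    [PartialOrder M] [IsOrderedCancelAddMonoid M] {α : ι → Type*} {g : ∀ i, α i → M}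
    {x z : ∀ i, α i} (hlt : ∀ i, x i ≠ z i → g i (x i) < g i (z i)) (hne : x ≠ z) :
    ∑ i, g i (x i) < ∑ i, g i (z i) := by
  obtain ⟨i, hi⟩ := Function.ne_iff.1 hne
  have hle (i : ι) : g i (x i) ≤ g i (z i) := by
    by_cases h : x i = z i
    · rw [h]
    · exact (hlt i h).le
  exact Finset.sum_lt_sum (fun i _ ↦ hle i) ⟨i, Finset.mem_univ i, hlt i hi⟩

variable {ι κ : Type*}

/-- The Squashed Shifted PMI matrix of positive-pair weights `p`, negative-pair weights `q` and
negative-sampling rate `k`. It is the paper's matrix when `q i j` is the product of the marginals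
of `p` at `i` and `j`; the weights `q` are arbitrary here. -/
noncomputable def squashedShiftedPMI (k : ℝ) (p q : ι → κ → ℝ) (i : ι) (j : κ) : ℝ :=
  logisticSigmoid (log (p i j / q i j) - log k)

theorem squashedShiftedPMI_pos (k : ℝ) (p q : ι → κ → ℝ) (i : ι) (j : κ) :
    0 < squashedShiftedPMI k p q i j := by
  rw [squashedShiftedPMI, logisticSigmoid_eq_sigmoid]
  exact Real.sigmoid_pos _

theorem squashedShiftedPMI_lt_one (k : ℝ) (p q : ι → κ → ℝ) (i : ι) (j : κ) :
    squashedShiftedPMI k p q i j < 1 := by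
  rw [squashedShiftedPMI, logisticSigmoid_eq_sigmoid]
  exact Real.sigmoid_lt_one _

theorem squashedShiftedPMI_eq_div {k : ℝ} (hk : 0 < k) {p q : ι → κ → ℝ} {i : ι} {j : κ}
    (hp : 0 < p i j) (hq : 0 < q i j) :
    squashedShiftedPMI k p q i j = p i j / (p i j + q i j * k) := by
  rw [squashedShiftedPMI, logisticSigmoid_log_sub_log (div_pos hp hq) hk]
  field_simp

variable [Fintype ι] [Fintype κ]

/-- The Nonsigmoid SGNS objective with negative-sampling rate `k`, as a function of the matrix `x`
of inner products `⟨w_i, c_j⟩`. The pair `(i, j)` has weight `p i j` as a positive sample and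
`q i j * k` as a negative one. -/
noncomputable def nonsigmoidSGNSObjective (k : ℝ) (p q x : ι → κ → ℝ) : ℝ :=
  ∑ i, ∑ j, (p i j * log (x i j) + q i j * k * log (1 - x i j))

theorem nonsigmoidSGNSObjective_lt {k : ℝ} (hk : 0 < k) {p q x : ι → κ → ℝ}
    (hp : ∀ i j, 0 < p i j) (hq : ∀ i j, 0 < q i j) (hx : ∀ i j, 0 < x i j ∧ x i j < 1)
    (hne : x ≠ squashedShiftedPMI k p q) :
    nonsigmoidSGNSObjective k p q x <
      nonsigmoidSGNSObjective k p q (squashedShiftedPMI k p q) := by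
  let cell (i : ι) (j : κ) (y : ℝ) : ℝ := p i j * log y + q i j * k * log (1 - y)
  have hcell (i : ι) (j : κ) (hij : x i j ≠ squashedShiftedPMI k p q i j) :
      cell i j (x i j) < cell i j (squashedShiftedPMI k p q i j) := by
    have hqk : 0 < q i j * k := mul_pos (hq i j) hk
    rw [squashedShiftedPMI_eq_div hk (hp i j) (hq i j)] at hij ⊢
    exact mul_log_add_mul_log_one_sub_lt (hp i j).le hqk.le (add_pos (hp i j) hqk)
      (hx i j).1 (hx i j).2 hij
  have hrow (i : ι) (hi : x i ≠ squashedShiftedPMI k p q i) :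
      ∑ j, cell i j (x i j) < ∑ j, cell i j (squashedShiftedPMI k p q i j) :=
    sum_lt_sum_of_forall_ne_imp_lt (hcell i) hi
  exact sum_lt_sum_of_forall_ne_imp_lt (g := fun i (row : κ → ℝ) ↦ ∑ j, cell i j (row j)) hrow hne

theorem nonsigmoid_sgns_optimum_general {k : ℝ} (hk : 0 < k) {p q : ι → κ → ℝ}
    (hp : ∀ i j, 0 < p i j) (hq : ∀ i j, 0 < q i j) :
    (∀ i j, 0 < squashedShiftedPMI k p q i j ∧ squashedShiftedPMI k p q i j < 1) ∧
    ∀ x : ι → κ → ℝ, (∀ i j, 0 < x i j ∧ x i j < 1) →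
      nonsigmoidSGNSObjective k p q x ≤
        nonsigmoidSGNSObjective k p q (squashedShiftedPMI k p q) ∧
      (nonsigmoidSGNSObjective k p q x =
        nonsigmoidSGNSObjective k p q (squashedShiftedPMI k p q) ↔
          x = squashedShiftedPMI k p q) := by
  refine ⟨fun i j ↦ ⟨squashedShiftedPMI_pos k p q i j, squashedShiftedPMI_lt_one k p q i j⟩,
    fun x hx ↦ ?_⟩
  obtain rfl | hne := eq_or_ne x (squashedShiftedPMI k p q)
  · exact ⟨le_rfl, iff_of_true rfl rfl⟩
  · have hlt := nonsigmoidSGNSObjective_lt hk hp hq hx hne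
    exact ⟨hlt.le, iff_of_false hlt.ne hne⟩

theorem sum_row_mul_sum_col_pos {R : Type*} [Semiring R] [PartialOrder R] [IsStrictOrderedRing R]
    {p : ι → κ → R} (hp : ∀ i j, 0 ≤ p i j) {i : ι} {j : κ} (hij : 0 < p i j) :
    0 < (∑ j', p i j') * ∑ i', p i' j :=
  mul_pos (Finset.sum_pos' (fun j' _ ↦ hp i j') ⟨j, Finset.mem_univ j, hij⟩)
    (Finset.sum_pos' (fun i' _ ↦ hp i' j) ⟨i, Finset.mem_univ i, hij⟩)

end

/-- **Theorem 1.** The Nonsigmoid SGNS objective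
`F(x) = ∑_{i,j} [ p i j * log (x i j) + qᵣ i * q_c j * k * log (1 - x i j) ]`
over matrices with entries in `(0,1)` attains its maximum exactly at the matrix
`x* i j = σ( log (p i j / (qᵣ i * q_c j)) - log k )`, the squashed shifted PMI matrix. -/
theorem nonsigmoid_sgns_optimum
    {n : ℕ} (hn : 1 ≤ n) {k : ℝ} (hk : 0 < k)
    (p : Fin n → Fin n → ℝ) (hpos : ∀ i j, 0 < p i j)
    (hpmf : ∑ i, ∑ j, p i j = 1)
    (qr qc : Fin n → ℝ)
    (hqr : ∀ i, qr i = ∑ j, p i j)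
    (hqc : ∀ j, qc j = ∑ i, p i j)
    (F : (Fin n → Fin n → ℝ) → ℝ)
    (hF : ∀ x, F x = ∑ i, ∑ j,
      (p i j * Real.log (x i j) + qr i * qc j * k * Real.log (1 - x i j)))
    (xstar : Fin n → Fin n → ℝ)
    (hxstar : ∀ i j, xstar i j =
      logisticSigmoid (Real.log (p i j / (qr i * qc j)) - Real.log k)) :
    (∀ i j, 0 < xstar i j ∧ xstar i j < 1) ∧
    ∀ x : Fin n → Fin n → ℝ, (∀ i j, 0 < x i j ∧ x i j < 1) →
      F x ≤ F xstar ∧ (F x = F xstar ↔ x = xstar) := by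
  have hq (i j : Fin n) : 0 < qr i * qc j := by
    rw [hqr, hqc]
    exact sum_row_mul_sum_col_pos (fun i j ↦ (hpos i j).le) (hpos i j)
  obtain ⟨rfl, rfl⟩ : F = nonsigmoidSGNSObjective k p (fun i j ↦ qr i * qc j) ∧
      xstar = squashedShiftedPMI k p (fun i j ↦ qr i * qc j) := ⟨funext hF, funext₂ hxstar⟩
  exact nonsigmoid_sgns_optimum_general hk hpos hq
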